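/- arXiv:1506.06308 — 2 statements merged into one kernel-verified Lean document; each statement's English description precedes it below -/
import Mathlib

section
/- There exist constants C > 0 and ω₁ ≥ ω₀ such that for every ω ≥ ω₁ and every t ∈ [0, T], ‖ y(t; ω) − p_{0,0}(t) ‖ ≤ C / ω; that is, as ω → ∞ the solution of the highly oscillatory nonlinear ODE converges uniformly on [0, T] to the solution of the unforced averaged equation, with rate O(ω^{−1}). -/
open MeasureTheory

/-!
The forcing has frequency of order `ω`, so integrating it by parts once shows that, up to an
error of size `O(ω⁻¹)`, it is the derivative of a function `G` of size `O(ω⁻¹)`.  Hence `y - G`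
nearly solves the averaged equation, and Gronwall's inequality compares it with `p₀₀`.  As `f` is
only locally Lipschitz, the Gronwall estimate is a bootstrap: the differential inequality is
available as long as `y` stays close to `p₀₀`, and the bound it yields keeps `y` close.
-/

open Set Metric
open scoped NNReal

section Lipschitz

variable {X Y : Type*} [PseudoMetricSpace X] [PseudoMetricSpace Y]

theorem exists_dist_le_mul_near_of_isCompact {f : X → Y} (hf : LocallyLipschitz f) {s : Set X}
    (hs : IsCompact s) :
    ∃ K : ℝ≥0, ∃ δ > 0, ∀ x ∈ s, ∀ z, dist z x ≤ δ → dist (f z) (f x) ≤ K * dist z x := by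
  refine hs.induction_on (p := fun s => ∃ K : ℝ≥0, ∃ δ > 0, ∀ x ∈ s, ∀ z, dist z x ≤ δ →
    dist (f z) (f x) ≤ K * dist z x) ⟨0, 1, one_pos, by simp⟩ ?mono ?union ?nhds
  case mono =>
    rintro s t hst ⟨K, δ, hδ, hK⟩
    exact ⟨K, δ, hδ, fun x hx => hK x (hst hx)⟩
  case union =>
    rintro s t ⟨K, δ, hδ, hK⟩ ⟨K', δ', hδ', hK'⟩
    refine ⟨max K K', min δ δ', lt_min hδ hδ', ?_⟩
    rintro x (hx | hx) z hz
    · refine (hK x hx z (hz.trans (min_le_left _ _))).trans ?_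
      gcongr
      exact le_max_left _ _
    · refine (hK' x hx z (hz.trans (min_le_right _ _))).trans ?_
      gcongr
      exact le_max_right _ _
  case nhds =>
    intro x _
    obtain ⟨K, U, hU, hK⟩ := hf x
    obtain ⟨r, hr, hrU⟩ := Metric.mem_nhds_iff.mp hU
    refine ⟨ball x (r / 2), mem_nhdsWithin_of_mem_nhds (ball_mem_nhds x (half_pos hr)),
      K, r / 3, by positivity, fun z hz w hw => ?_⟩
    rw [mem_ball] at hz
    have hzU : z ∈ U := hrU (mem_ball.mpr (by linarith))
    have hwU : w ∈ U := hrU (mem_ball.mpr (by linarith [dist_triangle w z x]))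
    exact hK.dist_le_mul w hwU z hzU

end Lipschitz

section Stability

variable {E : Type*} [NormedAddCommGroup E] [NormedSpace ℝ E] {a b K : ℝ}

theorem norm_le_mul_exp_of_norm_deriv_le_of_norm_le {u u' : ℝ → E} {D η : ℝ} (hK : 0 ≤ K)
    (hu : ∀ t ∈ Icc a b, HasDerivWithinAt u (u' t) (Icc a b) t)
    (ha : ‖u a‖ ≤ D) (hη : η < D)
    (hu' : ∀ t ∈ Ico a b, ‖u t‖ ≤ D * Real.exp ((K + 1) * (b - a)) → ‖u' t‖ ≤ K * ‖u t‖ + η) :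
    ∀ t ∈ Icc a b, ‖u t‖ ≤ D * Real.exp ((K + 1) * (t - a)) := by
  have hD : 0 ≤ D := (norm_nonneg _).trans ha
  -- Where `u` touches the barrier, `‖u' t‖ ≤ K * ‖u t‖ + η < (K + 1) * ‖u t‖`, the barrier's slope.
  refine fun t ht => image_norm_le_of_norm_deriv_right_lt_deriv_boundary
    (B := fun t => D * Real.exp ((K + 1) * (t - a)))
    (B' := fun t => D * (Real.exp ((K + 1) * (t - a)) * (K + 1)))
    (fun s hs => (hu s hs).continuousWithinAt)
    (fun s hs => (hu s (Ico_subset_Icc_self hs)).mono_of_mem_nhdsWithin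
      (Icc_mem_nhdsGE_of_mem hs)) (by simpa using ha) (fun s => ?_) (fun s hs hsB => ?_) ht
  · simpa using ((((hasDerivAt_id s).sub_const a).const_mul (K + 1)).exp).const_mul D
  · have hle : ‖u s‖ ≤ D * Real.exp ((K + 1) * (b - a)) := by
      rw [hsB]
      gcongr
      exact hs.2.le
    have hDle : D ≤ ‖u s‖ := by
      rw [hsB]
      refine le_mul_of_one_le_right hD (Real.one_le_exp ?_)
      exact mul_nonneg (by linarith) (sub_nonneg.mpr hs.1)
    calc ‖u' s‖ ≤ K * ‖u s‖ + η := hu' s hs hle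
      _ < K * ‖u s‖ + ‖u s‖ := by linarith
      _ = D * (Real.exp ((K + 1) * (s - a)) * (K + 1)) := by rw [hsB]; ring

theorem norm_sub_le_of_forcing_almost_deriv_small {v : ℝ → E → E} {p y g G h : ℝ → E} {δ ε : ℝ}
    (hK : 0 ≤ K) (hε : 0 < ε)
    (hv : ∀ t ∈ Icc a b, ∀ x, ‖x - p t‖ ≤ δ → ‖v t x - v t (p t)‖ ≤ K * ‖x - p t‖)
    (hp : ∀ t ∈ Icc a b, HasDerivWithinAt p (v t (p t)) (Icc a b) t)
    (hy : ∀ t ∈ Icc a b, HasDerivWithinAt y (v t (y t) + g t) (Icc a b) t)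
    (hG : ∀ t ∈ Icc a b, HasDerivWithinAt G (g t + h t) (Icc a b) t)
    (hya : ‖y a - p a‖ ≤ ε) (hGε : ∀ t ∈ Icc a b, ‖G t‖ ≤ ε) (hhε : ∀ t ∈ Icc a b, ‖h t‖ ≤ ε)
    (hδ : ((K + 2) * Real.exp ((K + 1) * (b - a)) + 1) * ε ≤ δ) :
    ∀ t ∈ Icc a b, ‖y t - p t‖ ≤ ((K + 2) * Real.exp ((K + 1) * (b - a)) + 1) * ε := by
  intro t ht
  have hyp : ∀ s ∈ Icc a b, ‖y s - p s‖ ≤ ‖y s - G s - p s‖ + ε := fun s hs => by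
    calc ‖y s - p s‖ = ‖(y s - G s - p s) + G s‖ := by congr 1; abel
      _ ≤ ‖y s - G s - p s‖ + ε := norm_add_le_of_le le_rfl (hGε s hs)
  have hu : ∀ s ∈ Icc a b, HasDerivWithinAt (fun s => y s - G s - p s)
      (v s (y s) - v s (p s) - h s) (Icc a b) s := fun s hs =>
    (((hy s hs).sub (hG s hs)).sub (hp s hs)).congr_deriv (by abel)
  have hua : ‖y a - G a - p a‖ ≤ (K + 2) * ε := by
    have haI : a ∈ Icc a b := left_mem_Icc.mpr (ht.1.trans ht.2)
    calc ‖y a - G a - p a‖ = ‖(y a - p a) - G a‖ := by congr 1; abel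
      _ ≤ ε + ε := norm_sub_le_of_le hya (hGε a haI)
      _ ≤ (K + 2) * ε := by linarith [mul_nonneg hK hε.le]
  have hu' : ∀ s ∈ Ico a b, ‖y s - G s - p s‖ ≤ (K + 2) * ε * Real.exp ((K + 1) * (b - a)) →
      ‖v s (y s) - v s (p s) - h s‖ ≤ K * ‖y s - G s - p s‖ + (K + 1) * ε := by
    intro s hs hsmall
    have hsI := Ico_subset_Icc_self hs
    have hnear : ‖y s - p s‖ ≤ δ := by linarith [hyp s hsI]
    calc ‖v s (y s) - v s (p s) - h s‖ ≤ K * ‖y s - p s‖ + ε :=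
          norm_sub_le_of_le (hv s hsI _ hnear) (hhε s hsI)
      _ ≤ K * (‖y s - G s - p s‖ + ε) + ε := by gcongr; exact hyp s hsI
      _ = K * ‖y s - G s - p s‖ + (K + 1) * ε := by ring
  calc ‖y t - p t‖ ≤ ‖y t - G t - p t‖ + ε := hyp t ht
    _ ≤ (K + 2) * ε * Real.exp ((K + 1) * (t - a)) + ε := by
      gcongr
      exact norm_le_mul_exp_of_norm_deriv_le_of_norm_le hK hu hua (by linarith) hu' t ht
    _ ≤ (K + 2) * ε * Real.exp ((K + 1) * (b - a)) + ε := by gcongr; exact ht.2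
    _ = ((K + 2) * Real.exp ((K + 1) * (b - a)) + 1) * ε := by ring

end Stability

section Oscillation

variable {ι E : Type*} [Fintype ι] [NormedAddCommGroup E] [NormedSpace ℂ E]

/-- The modulated Fourier sum `∑ₘ exp (i κₘ ω t) aₘ(t)` with frequencies `κₘ ω` and time-dependent
amplitudes `aₘ`, which is the highly oscillatory forcing term of the equation. -/
noncomputable def modulatedFourierSum (κ : ι → ℝ) (a : ι → ℝ → E) (ω t : ℝ) : E :=
  ∑ m, Complex.exp (Complex.I * κ m * ω * t) • a m t

theorem norm_modulatedFourierSum_le (κ : ι → ℝ) (a : ι → ℝ → E) (ω t : ℝ) :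
    ‖modulatedFourierSum κ a ω t‖ ≤ ∑ m, ‖a m t‖ := by
  refine norm_sum_le_of_le _ fun m _ => ?_
  have hphase : Complex.I * κ m * ω * t = ((κ m * ω * t : ℝ) : ℂ) * Complex.I := by
    push_cast
    ring
  rw [norm_smul, hphase, Complex.norm_exp_ofReal_mul_I, one_mul]

theorem exists_norm_modulatedFourierSum_smul_le (κ : ι → ℝ) (c : ι → ℂ) {a : ι → ℝ → E}
    {s : Set ℝ} (ha : ∀ m, ∃ B, ∀ t ∈ s, ‖a m t‖ ≤ B) :
    ∃ A, ∀ ω, ∀ t ∈ s, ‖modulatedFourierSum κ (fun m t => c m • a m t) ω t‖ ≤ A := by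
  choose B hB using ha
  refine ⟨∑ m, ‖c m‖ * B m, fun ω t ht => (norm_modulatedFourierSum_le κ _ ω t).trans ?_⟩
  gcongr with m
  rw [norm_smul]
  gcongr
  exact hB m t ht

theorem hasDerivWithinAt_modulatedFourierSum (κ : ι → ℝ) {a a' : ι → ℝ → E} (ω : ℝ) {s : Set ℝ}
    {t : ℝ} (ha : ∀ m, HasDerivWithinAt (a m) (a' m t) s t) :
    HasDerivWithinAt (modulatedFourierSum κ a ω)
      (ω • modulatedFourierSum κ (fun m t => (Complex.I * κ m) • a m t) ω t +
        modulatedFourierSum κ a' ω t) s t := by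
  simp only [modulatedFourierSum, Finset.smul_sum, ← Finset.sum_add_distrib]
  refine HasDerivWithinAt.fun_sum fun m _ => ?_
  have hexp : HasDerivAt (fun t : ℝ => Complex.exp (Complex.I * κ m * ω * t))
      (Complex.exp (Complex.I * κ m * ω * t) * (Complex.I * κ m * ω)) t := by
    simpa using ((Complex.ofRealCLM.hasDerivAt (x := t)).const_mul (Complex.I * κ m * ω)).cexp
  refine (hexp.hasDerivWithinAt.smul (ha m)).congr_deriv ?_
  rw [add_comm, ← Complex.coe_smul, smul_smul, smul_smul]
  congr 2
  ring

theorem hasDerivWithinAt_inv_smul_modulatedFourierSum {κ : ι → ℝ} (hκ : ∀ m, κ m ≠ 0)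
    {a a' : ι → ℝ → E} {ω : ℝ} (hω : ω ≠ 0) {s : Set ℝ} {t : ℝ}
    (ha : ∀ m, HasDerivWithinAt (a m) (a' m t) s t) :
    HasDerivWithinAt
      (ω⁻¹ • modulatedFourierSum κ (fun m t => (Complex.I * κ m)⁻¹ • a m t) ω)
      (modulatedFourierSum κ a ω t +
        ω⁻¹ • modulatedFourierSum κ (fun m t => (Complex.I * κ m)⁻¹ • a' m t) ω t) s t := by
  have hIκ : ∀ m, Complex.I * κ m ≠ 0 := fun m => by simp [hκ m]
  have hsum := (hasDerivWithinAt_modulatedFourierSum κ ω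
    (a := fun m t => (Complex.I * κ m)⁻¹ • a m t) (a' := fun m t => (Complex.I * κ m)⁻¹ • a' m t)
    fun m => (ha m).const_smul (Complex.I * κ m : ℂ)⁻¹).const_smul ω⁻¹
  simpa only [smul_add, inv_smul_smul₀ hω, smul_inv_smul₀ (hIκ _)] using hsum

end Oscillation

theorem nonlinear_zeroth_order_general {ι E : Type*} [Fintype ι] [NormedAddCommGroup E]
    [NormedSpace ℂ E] {f : E → E} (hf : LocallyLipschitz f) {κ : ι → ℝ} (hκ : ∀ m, κ m ≠ 0)
    {a a' : ι → ℝ → E} {T : ℝ}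
    (ha : ∀ m, ∀ t ∈ Icc 0 T, HasDerivWithinAt (a m) (a' m t) (Icc 0 T) t)
    (ha' : ∀ m, ∃ B, ∀ t ∈ Icc 0 T, ‖a' m t‖ ≤ B) {p : ℝ → E}
    (hp : ∀ t ∈ Icc 0 T, HasDerivWithinAt p (f (p t)) (Icc 0 T) t) {ω₀ : ℝ} {y : ℝ → ℝ → E}
    (hy0 : ∀ ω, ω₀ ≤ ω → y ω 0 = p 0)
    (hy : ∀ ω, ω₀ ≤ ω → ∀ t ∈ Icc 0 T,
      HasDerivWithinAt (y ω) (f (y ω t) + modulatedFourierSum κ a ω t) (Icc 0 T) t) :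
    ∃ C > 0, ∃ ω₁, ω₀ ≤ ω₁ ∧ ∀ ω, ω₁ ≤ ω → ∀ t ∈ Icc 0 T, ‖y ω t - p t‖ ≤ C / ω := by
  obtain ⟨K, δ, hδ, hK⟩ := exists_dist_le_mul_near_of_isCompact hf
    (isCompact_Icc.image_of_continuousOn fun t ht => (hp t ht).continuousWithinAt)
  simp only [forall_mem_image, dist_eq_norm] at hK
  obtain ⟨A, hA⟩ := exists_norm_modulatedFourierSum_smul_le κ (fun m => (Complex.I * κ m : ℂ)⁻¹)
    fun m => isCompact_Icc.exists_bound_of_continuousOn fun t ht =>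
      (ha m t ht).continuousWithinAt
  obtain ⟨A', hA'⟩ :=
    exists_norm_modulatedFourierSum_smul_le κ (fun m => (Complex.I * κ m : ℂ)⁻¹) ha'
  let B := max 1 (max A A')
  have hB : 0 < B := lt_max_of_lt_left one_pos
  let C : ℝ := ((K + 2) * Real.exp ((K + 1) * (T - 0)) + 1) * B
  have hC : 0 < C := by positivity
  refine ⟨C, hC, max ω₀ (C / δ), le_max_left _ _, fun ω hω t ht => ?_⟩
  have hω₀ : ω₀ ≤ ω := (le_max_left _ _).trans hω
  have hCδ : C / δ ≤ ω := (le_max_right _ _).trans hω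
  have hωpos : 0 < ω := (div_pos hC hδ).trans_le hCδ
  have hsmall : ∀ z : E, ‖z‖ ≤ B → ‖ω⁻¹ • z‖ ≤ B / ω := fun z hz => by
    rw [norm_smul, norm_inv, Real.norm_of_nonneg hωpos.le, inv_mul_eq_div]
    gcongr
  have hCω : C / ω = ((K + 2) * Real.exp ((K + 1) * (T - 0)) + 1) * (B / ω) := mul_div_assoc _ _ _
  rw [hCω]
  exact norm_sub_le_of_forcing_almost_deriv_small (v := fun _ => f) K.2 (div_pos hB hωpos) hK hp
    (hy ω hω₀)
    (fun s hs => hasDerivWithinAt_inv_smul_modulatedFourierSum hκ hωpos.ne' fun m => ha m s hs)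
    (by simpa [hy0 ω hω₀] using (div_pos hB hωpos).le)
    (fun s hs => hsmall _ ((hA ω s hs).trans (by simp [B])))
    (fun s hs => hsmall _ ((hA' ω s hs).trans (by simp [B])))
    (hCω ▸ (div_le_comm₀ hδ hωpos).mp hCδ) t ht

/-- As `ω → ∞` the solution of the highly oscillatory nonlinear ODE converges, uniformly
on `[0, T]` and with rate `O(ω⁻¹)`, to the solution of the unforced averaged equation. -/
theorem nonlinear_zeroth_order {d M : ℕ} (hd : 1 ≤ d) (hM : 1 ≤ M)
    (f : (Fin d → ℂ) → (Fin d → ℂ)) (hf : ∀ n : ℕ, ContDiff ℝ (n : ℕ∞) f)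
    (κ : Fin M → ℝ) (hκ : ∀ m, κ m ≠ 0)
    (a : Fin M → ℝ → Fin d → ℂ) (ha : ∀ m, ∀ n : ℕ, ContDiff ℝ (n : ℕ∞) (a m))
    (y₀ : Fin d → ℂ) (T : ℝ) (hT : 0 < T)
    (p₀₀ : ℝ → Fin d → ℂ) (hp₀₀0 : p₀₀ 0 = y₀)
    (hp₀₀ : ∀ t ∈ Set.Icc (0 : ℝ) T,
      HasDerivWithinAt p₀₀ (f (p₀₀ t)) (Set.Icc (0 : ℝ) T) t)
    (ω₀ : ℝ) (hω₀ : 0 < ω₀)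
    (y : ℝ → ℝ → Fin d → ℂ)
    (hy0 : ∀ ω : ℝ, ω₀ ≤ ω → y ω 0 = y₀)
    (hy : ∀ ω : ℝ, ω₀ ≤ ω → ∀ t ∈ Set.Icc (0 : ℝ) T,
      HasDerivWithinAt (y ω)
        (f (y ω t) + ∑ m : Fin M, Complex.exp (Complex.I * (κ m) * ω * t) • a m t)
        (Set.Icc (0 : ℝ) T) t) :
    ∃ C > 0, ∃ ω₁ : ℝ, ω₀ ≤ ω₁ ∧ ∀ ω : ℝ, ω₁ ≤ ω → ∀ t ∈ Set.Icc (0 : ℝ) T,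
      ‖y ω t - p₀₀ t‖ ≤ C / ω := by
  have ha1 : ∀ m, ContDiff ℝ 1 (a m) := fun m => by simpa using ha m 1
  have hf1 : ContDiff ℝ 1 f := by simpa using hf 1
  exact nonlinear_zeroth_order_general hf1.locallyLipschitz hκ
    (fun m t _ => ((ha1 m).differentiable one_ne_zero t).hasDerivAt.hasDerivWithinAt)
    (fun m => isCompact_Icc.exists_bound_of_continuousOn
      ((ha1 m).continuous_deriv le_rfl).continuousOn)
    hp₀₀ (fun ω hω => (hy0 ω hω).trans hp₀₀0.symm) hy
end

section
/- There exist constants C > 0 and ω₁ ≥ ω₀ such that for every ω ≥ ω₁ and every t ∈ [0, T], ‖ y(t; ω) − Y₁(t; ω) ‖ ≤ C ω^{−2}; that is, the first-order truncation of the asymptotic expansion approximates the solution of the nonlinear highly oscillatory ODE uniformly on [0, T] with error O(ω^{−2}). -/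
open MeasureTheory

/-!
The proof is consistency plus stability. Integrating by parts, `Σ aₘ e^{iκₘωt}` is `ω⁻¹` times the
derivative of `Σ (iκₘ)⁻¹ aₘ e^{iκₘωt}` up to `O(ω⁻¹)`, so `Y₁` solves the equation up to a residual
of size `ω⁻¹` which is itself purely oscillatory. Adding to `Y₁` a second-order term `ω⁻² G`, where
`G` is obtained by integrating that residual once more, gives an approximate solution `Z` whose
residual is `O(ω⁻²)` by Taylor's formula around `p₀₀`. A Grönwall estimate in a thin tube around the
compact trajectory of `p₀₀` then yields `y - Z = O(ω⁻²)`, while `Z - Y₁ = ω⁻² G = O(ω⁻²)`.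
-/

open Set Filter Topology Asymptotics Metric
open scoped NNReal

section LocalEstimates

variable {E F : Type*} [NormedAddCommGroup E] [NormedSpace ℝ E] [NormedAddCommGroup F]
  [NormedSpace ℝ F] {f : E → F} {K : Set E}

theorem exists_forall_lipschitzOnWith_ball_of_isCompact (hf : ContDiff ℝ 1 f)
    (hK : IsCompact K) : ∃ C : ℝ≥0, ∃ δ > 0, ∀ x ∈ K, LipschitzOnWith C f (ball x δ) := by
  have hf' : Continuous fun x ↦ ‖fderiv ℝ f x‖₊ := (hf.continuous_fderiv one_ne_zero).nnnorm
  obtain ⟨C, hC⟩ := hK.bddAbove_image hf'.continuousOn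
  have hKC : K ⊆ {x | ‖fderiv ℝ f x‖₊ < C + 1} := fun x hx ↦
    (hC (mem_image_of_mem _ hx)).trans_lt (lt_add_one C)
  obtain ⟨δ, hδ, hKδ⟩ := hK.exists_thickening_subset_open (isOpen_lt hf' continuous_const) hKC
  refine ⟨C + 1, δ, hδ, fun x hx ↦ (convex_ball x δ).lipschitzOnWith_of_nnnorm_fderiv_le
    (fun z _ ↦ hf.differentiable one_ne_zero z) fun z hz ↦ ?_⟩
  exact (hKδ (ball_subset_thickening hx δ hz)).le

theorem exists_forall_norm_sub_sub_fderiv_le_sq_of_isCompact (hf : ContDiff ℝ 2 f)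
    (hK : IsCompact K) : ∃ C : ℝ≥0, ∃ δ > 0, ∀ x ∈ K, ∀ z ∈ ball x δ,
      ‖f z - f x - fderiv ℝ f x (z - x)‖ ≤ C * ‖z - x‖ ^ 2 := by
  have hDf : ContDiff ℝ 1 (fderiv ℝ f) := hf.fderiv_right (by norm_num)
  obtain ⟨C, δ, hδ, hLip⟩ := exists_forall_lipschitzOnWith_ball_of_isCompact hDf hK
  refine ⟨C, δ, hδ, fun x hx z hz ↦ ?_⟩
  have hDf_sub : ∀ w ∈ closedBall x ‖z - x‖, ‖fderiv ℝ f w - fderiv ℝ f x‖ ≤ C * ‖z - x‖ := by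
    intro w hw
    rw [mem_closedBall_iff_norm] at hw
    have hwδ : w ∈ ball x δ := mem_ball_iff_norm.2 (hw.trans_lt (mem_ball_iff_norm.1 hz))
    exact ((hLip x hx).norm_sub_le hwδ (mem_ball_self hδ)).trans (by gcongr)
  rw [pow_two, ← mul_assoc]
  exact (convex_closedBall x ‖z - x‖).norm_image_sub_le_of_norm_fderiv_le'
    (fun w _ ↦ hf.differentiable two_ne_zero w) hDf_sub
    (mem_closedBall_self (norm_nonneg _)) (mem_closedBall_iff_norm.2 le_rfl)

theorem isBigO_sub_sub_fderiv_sq_of_isCompact {α : Type*} {l : Filter α} {x z : α → E}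
    (hf : ContDiff ℝ 2 f) (hK : IsCompact K) (hx : ∀ᶠ i in l, x i ∈ K)
    (hzx : Tendsto (fun i ↦ z i - x i) l (𝓝 0)) :
    (fun i ↦ f (z i) - f (x i) - fderiv ℝ f (x i) (z i - x i)) =O[l]
      fun i ↦ ‖z i - x i‖ ^ 2 := by
  obtain ⟨C, δ, hδ, hC⟩ := exists_forall_norm_sub_sub_fderiv_le_sq_of_isCompact hf hK
  refine IsBigO.of_bound C ?_
  filter_upwards [hx, hzx (ball_mem_nhds 0 hδ)] with i hi hzi
  rw [Real.norm_of_nonneg (by positivity)]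
  exact hC _ hi _ (mem_ball_iff_norm.2 (mem_ball_zero_iff.1 hzi))

theorem isBigO_clm_apply {α : Type*} {l : Filter α} {L : α → E →L[ℝ] F} {v : α → E}
    {g₁ g₂ : α → ℝ} (hL : L =O[l] g₁) (hv : v =O[l] g₂) :
    (fun i ↦ L i (v i)) =O[l] fun i ↦ g₁ i * g₂ i :=
  (isBoundedBilinearMap_apply.isBigO_comp (𝕜 := ℝ)).trans (hL.norm_left.mul hv.norm_left)

end LocalEstimates

section UniformBigO

variable {ι α E : Type*} [NormedAddCommGroup E]

theorem isBigO_one_prod_principal_of_continuousOn [TopologicalSpace α] {g : α → E} {K : Set α}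
    (hg : ContinuousOn g K) (hK : IsCompact K) (l : Filter ι) :
    (fun x : ι × α ↦ g x.2) =O[l ×ˢ 𝓟 K] fun _ ↦ (1 : ℝ) :=
  (hg.isBigO_principal hK (by simp)).comp_tendsto tendsto_snd

theorem exists_forall_ge_norm_le_of_isBigO {F : Type*} [SeminormedAddCommGroup F]
    {u : ℝ × α → E} {v : ℝ × α → F} {K : Set α} (h : u =O[atTop ×ˢ 𝓟 K] v) (ω₀ : ℝ) :
    ∃ C > 0, ∃ ω₁ : ℝ, ω₀ ≤ ω₁ ∧ ∀ ω : ℝ, ω₁ ≤ ω → ∀ t ∈ K, ‖u (ω, t)‖ ≤ C * ‖v (ω, t)‖ := by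
  obtain ⟨C, hC, hbound⟩ := isBigO_iff'.1 h
  obtain ⟨ω₁, hω₁⟩ := eventually_atTop.1 (eventually_prod_principal_iff.1 hbound)
  exact ⟨C, hC, max ω₀ ω₁, le_max_left _ _, fun ω hω ↦ hω₁ ω ((le_max_right _ _).trans hω)⟩

end UniformBigO

section Stability

variable {E : Type*} [NormedAddCommGroup E] [NormedSpace ℝ E] {t₀ T : ℝ}

/-- The fencing theorem only tests the derivative at times where `u` touches the barrier, where
`‖u‖ ≤ δ` holds automatically; this replaces a continuation argument. -/
theorem norm_le_mul_exp_of_norm_deriv_right_lt {u u' : ℝ → E} {k η δ : ℝ} (hk : 0 ≤ k)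
    (hu : ContinuousOn u (Icc t₀ T)) (hu' : ∀ t ∈ Ico t₀ T, HasDerivWithinAt u (u' t) (Ici t) t)
    (hu₀ : ‖u t₀‖ ≤ η) (hηδ : η * Real.exp ((k + 1) * (T - t₀)) ≤ δ)
    (bound : ∀ t ∈ Ico t₀ T, ‖u t‖ ≤ δ → ‖u' t‖ < k * ‖u t‖ + η) :
    ∀ t ∈ Icc t₀ T, ‖u t‖ ≤ η * Real.exp ((k + 1) * (t - t₀)) := by
  have hη : 0 ≤ η := (norm_nonneg _).trans hu₀
  refine image_norm_le_of_norm_deriv_right_lt_deriv_boundary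
    (B' := fun t ↦ η * (Real.exp ((k + 1) * (t - t₀)) * (k + 1))) hu hu' (by simpa using hu₀)
    (fun t ↦ ?_) fun t ht htouch ↦ ?_
  · simpa using ((((hasDerivAt_id t).sub_const t₀).const_mul (k + 1)).exp).const_mul η
  · have hexp : 1 ≤ Real.exp ((k + 1) * (t - t₀)) :=
      Real.one_le_exp (mul_nonneg (by linarith) (sub_nonneg.2 ht.1))
    have hη_le : η ≤ ‖u t‖ := htouch ▸ le_mul_of_one_le_right hη hexp
    have hδ : ‖u t‖ ≤ δ := by
      rw [htouch]
      refine le_trans ?_ hηδ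
      gcongr
      exact ht.2.le
    calc ‖u' t‖ < k * ‖u t‖ + η := bound t ht hδ
      _ ≤ (k + 1) * ‖u t‖ := by linarith
      _ = η * (Real.exp ((k + 1) * (t - t₀)) * (k + 1)) := by rw [htouch]; ring

theorem norm_sub_le_mul_exp_of_lipschitzOnWith_ball {f : E → E} {P y z g r : ℝ → E} {k : ℝ≥0}
    {η δ : ℝ} (hf : ∀ t ∈ Icc t₀ T, LipschitzOnWith k f (ball (P t) δ))
    (hy : ∀ t ∈ Icc t₀ T, HasDerivWithinAt y (f (y t) + g t) (Icc t₀ T) t)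
    (hz : ∀ t ∈ Icc t₀ T, HasDerivWithinAt z (f (z t) + g t + r t) (Icc t₀ T) t)
    (hr : ∀ t ∈ Icc t₀ T, ‖r t‖ < η) (h₀ : ‖y t₀ - z t₀‖ ≤ η)
    (hzP : ∀ t ∈ Icc t₀ T, ‖z t - P t‖ < δ / 2)
    (hηδ : η * Real.exp ((k + 1) * (T - t₀)) < δ / 2) :
    ∀ t ∈ Icc t₀ T, ‖y t - z t‖ ≤ η * Real.exp ((k + 1) * (T - t₀)) := by
  have hsub (t : ℝ) (ht : t ∈ Icc t₀ T) := (hy t ht).sub (hz t ht)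
  have hgronwall := norm_le_mul_exp_of_norm_deriv_right_lt (u := y - z) k.coe_nonneg
    (fun t ht ↦ (hsub t ht).continuousWithinAt)
    (fun t ht ↦ (hsub t (Ico_subset_Icc_self ht)).mono_of_mem_nhdsWithin
      (Icc_mem_nhdsGE_of_mem ht)) h₀ le_rfl fun t ht hyz ↦ ?_
  · intro t ht
    have hη : 0 ≤ η := (norm_nonneg _).trans h₀
    refine (hgronwall t ht).trans ?_
    gcongr
    exact ht.2
  · have ht' := Ico_subset_Icc_self ht
    have hzt : z t ∈ ball (P t) δ := by
      rw [mem_ball_iff_norm]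
      linarith [hzP t ht', norm_nonneg (z t - P t)]
    have hyt : y t ∈ ball (P t) δ := by
      have hyz' : ‖y t - z t‖ < δ / 2 := hyz.trans_lt hηδ
      rw [mem_ball_iff_norm]
      linarith [hzP t ht', norm_sub_le_norm_sub_add_norm_sub (y t) (z t) (P t)]
    calc ‖f (y t) + g t - (f (z t) + g t + r t)‖ = ‖(f (y t) - f (z t)) - r t‖ := by
          congr 1; abel
      _ ≤ ‖f (y t) - f (z t)‖ + ‖r t‖ := norm_sub_le _ _
      _ < k * ‖y t - z t‖ + η :=
        add_lt_add_of_le_of_lt ((hf t ht').norm_sub_le hyt hzt) (hr t ht')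

theorem isBigO_sub_of_approx_trajectories {ι : Type*} {l : Filter ι} {f : E → E} {P : ℝ → E}
    {y z g r : ι → ℝ → E} {ε : ι → ℝ} (hf : ContDiff ℝ 1 f) (hP : ContinuousOn P (Icc t₀ T))
    (hy : ∀ᶠ i in l, ∀ t ∈ Icc t₀ T,
      HasDerivWithinAt (y i) (f (y i t) + g i t) (Icc t₀ T) t)
    (hz : ∀ᶠ i in l, ∀ t ∈ Icc t₀ T,
      HasDerivWithinAt (z i) (f (z i t) + g i t + r i t) (Icc t₀ T) t)
    (hzP : Tendsto (fun x : ι × ℝ ↦ z x.1 x.2 - P x.2) (l ×ˢ 𝓟 (Icc t₀ T)) (𝓝 0))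
    (hε : Tendsto ε l (𝓝[>] 0))
    (hr : (fun x : ι × ℝ ↦ r x.1 x.2) =O[l ×ˢ 𝓟 (Icc t₀ T)] fun x ↦ ε x.1)
    (h₀ : (fun i ↦ y i t₀ - z i t₀) =O[l] ε) :
    (fun x : ι × ℝ ↦ y x.1 x.2 - z x.1 x.2) =O[l ×ˢ 𝓟 (Icc t₀ T)] fun x ↦ ε x.1 := by
  obtain ⟨k, δ, hδ, hLip⟩ :=
    exists_forall_lipschitzOnWith_ball_of_isCompact hf (isCompact_Icc.image_of_continuousOn hP)
  obtain ⟨C₁, hC₁, hr⟩ := isBigO_iff'.1 hr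
  obtain ⟨C₂, hC₂, h₀⟩ := isBigO_iff'.1 h₀
  set X := Real.exp ((k + 1) * (T - t₀))
  have hsmall : ∀ᶠ i in l, (C₁ + C₂) * ε i * X < δ / 2 := by
    have hlim : Tendsto (fun i ↦ (C₁ + C₂) * ε i * X) l (𝓝 0) := by
      simpa using ((hε.mono_right nhdsWithin_le_nhds).const_mul (C₁ + C₂)).mul_const X
    exact hlim.eventually_lt_const (half_pos hδ)
  have hzP : ∀ᶠ x : ι × ℝ in l ×ˢ 𝓟 (Icc t₀ T), ‖z x.1 x.2 - P x.2‖ < δ / 2 :=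
    hzP.norm.eventually_lt_const (by simpa using half_pos hδ)
  refine IsBigO.of_bound ((C₁ + C₂) * X) (eventually_prod_principal_iff.2 ?_)
  filter_upwards [hy, hz, eventually_prod_principal_iff.1 hr, h₀, hsmall,
    hε.eventually self_mem_nhdsWithin, eventually_prod_principal_iff.1 hzP]
    with i hyi hzi hri h₀i hsmall_i (hεi : 0 < ε i) hzPi t ht
  simp only [Real.norm_of_nonneg hεi.le] at hri h₀i ⊢
  have hstab := norm_sub_le_mul_exp_of_lipschitzOnWith_ball (η := (C₁ + C₂) * ε i)
    (fun t ht ↦ hLip _ (mem_image_of_mem P ht)) hyi hzi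
    (fun t ht ↦ (hri t ht).trans_lt (by gcongr; linarith))
    (h₀i.trans (by gcongr; linarith)) hzPi hsmall_i t ht
  rwa [mul_right_comm]

end Stability

section Oscillation

variable {ι E : Type*} [NormedAddCommGroup E] [NormedSpace ℂ E] {b b' : ι → ℝ → E} {t : ℝ}
  {K : Set ℝ}

/-- The amplitudes `bₘ / (iκₘ)`, which are those of `ω` times the leading term of a primitive of
`modulatedSum κ b ω`. The paper's `p_{1,m}` is `primitiveAmplitude κ a m`. -/
noncomputable def primitiveAmplitude (κ : ι → ℝ) (b : ι → ℝ → E) (m : ι) (t : ℝ) : E :=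
  (Complex.I * κ m)⁻¹ • b m t

theorem hasDerivAt_primitiveAmplitude (κ : ι → ℝ) (hb : ∀ m, HasDerivAt (b m) (b' m t) t)
    (m : ι) :
    HasDerivAt (primitiveAmplitude κ b m) (primitiveAmplitude κ b' m t) t :=
  (hb m).const_smul _

theorem continuousOn_primitiveAmplitude (κ : ι → ℝ) (hb : ∀ m, ContinuousOn (b m) K) (m : ι) :
    ContinuousOn (primitiveAmplitude κ b m) K :=
  (hb m).const_smul _

variable [Fintype ι]

/-- The oscillatory sum `Σₘ e^{iκₘωt} bₘ(t)` with frequencies `κ` and slowly varying amplitudes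
`b`; the forcing term of the equation and the oscillatory part of `Y₁` have this shape. -/
noncomputable def modulatedSum (κ : ι → ℝ) (b : ι → ℝ → E) (ω t : ℝ) : E :=
  ∑ m, Complex.exp (Complex.I * κ m * ω * t) • b m t

theorem hasDerivAt_modulatedSum_primitiveAmplitude {κ : ι → ℝ} (hκ : ∀ m, κ m ≠ 0)
    (hb : ∀ m, HasDerivAt (b m) (b' m t) t) (ω : ℝ) :
    HasDerivAt (modulatedSum κ (primitiveAmplitude κ b) ω)
      (ω • modulatedSum κ b ω t + modulatedSum κ (primitiveAmplitude κ b') ω t) t := by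
  have hexp (m : ι) : HasDerivAt (fun s : ℝ ↦ Complex.exp (Complex.I * κ m * ω * s))
      (Complex.exp (Complex.I * κ m * ω * t) * (Complex.I * κ m * ω)) t := by
    simpa using ((Complex.ofRealCLM.hasDerivAt (x := t)).const_mul (Complex.I * κ m * ω)).cexp
  have hsum := HasDerivAt.fun_sum fun m (_ : m ∈ Finset.univ) ↦
    (hexp m).smul (hasDerivAt_primitiveAmplitude κ hb m)
  refine hsum.congr_deriv ?_
  simp only [modulatedSum, Finset.smul_sum, ← Finset.sum_add_distrib]
  refine Finset.sum_congr rfl fun m _ ↦ ?_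
  have hκm : Complex.I * (κ m : ℂ) ≠ 0 :=
    mul_ne_zero Complex.I_ne_zero (Complex.ofReal_ne_zero.2 (hκ m))
  have hcancel : Complex.exp (Complex.I * κ m * ω * t) * (Complex.I * κ m * ω) *
      (Complex.I * κ m)⁻¹ = ω * Complex.exp (Complex.I * κ m * ω * t) := by
    rw [mul_assoc, mul_right_comm _ (ω : ℂ) (_⁻¹), mul_inv_cancel₀ hκm, one_mul, mul_comm]
  rw [add_comm, primitiveAmplitude, smul_smul, hcancel, ← smul_smul, Complex.coe_smul]

theorem isBigO_one_modulatedSum (κ : ι → ℝ) (hb : ∀ m, ContinuousOn (b m) K)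
    (hK : IsCompact K) (l : Filter ℝ) :
    (fun x : ℝ × ℝ ↦ modulatedSum κ b x.1 x.2) =O[l ×ˢ 𝓟 K] fun _ ↦ (1 : ℝ) := by
  refine IsBigO.fun_sum fun m _ ↦ ?_
  have hexp (x : ℝ × ℝ) : ‖Complex.exp (Complex.I * κ m * x.1 * x.2)‖ = 1 := by
    simp [Complex.norm_exp]
  refine (isBigO_of_le _ fun x ↦ ?_).trans
    (isBigO_one_prod_principal_of_continuousOn (hb m) hK l)
  rw [norm_smul, hexp, one_mul]

end Oscillation

section Expansion

variable {ι E : Type*} [Fintype ι] [NormedAddCommGroup E] [NormedSpace ℂ E]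

/-- The first-order truncation `Y₁(t; ω)`, with `P` and `p` standing for `p_{0,0}` and `p_{1,0}`. -/
noncomputable def firstOrderExpansion (κ : ι → ℝ) (a : ι → ℝ → E) (P p : ℝ → E) (ω t : ℝ) : E :=
  P t + ω⁻¹ • (p t + modulatedSum κ (primitiveAmplitude κ a) ω t)

/-- The second-order term `G`: `ω⁻¹ G` is a primitive, up to `O(ω⁻¹)`, of the oscillatory function
`Df(P) (Σₘ p_{1,m} e^{iκₘωt}) - Σₘ p'_{1,m} e^{iκₘωt}`, and `-ω⁻¹` times that function is the
leading residual of `Y₁`. -/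
noncomputable def corrector (f : E → E) (κ : ι → ℝ) (a : ι → ℝ → E) (P : ℝ → E) (ω t : ℝ) : E :=
  fderiv ℝ f (P t) (modulatedSum κ (primitiveAmplitude κ (primitiveAmplitude κ a)) ω t)
    - modulatedSum κ (primitiveAmplitude κ (primitiveAmplitude κ fun m ↦ deriv (a m))) ω t

/-- The part of the derivative of `corrector` which stays bounded as `ω → ∞`. -/
noncomputable def correctorRemainder (f : E → E) (κ : ι → ℝ) (a : ι → ℝ → E) (P : ℝ → E)
    (ω t : ℝ) : E :=
  fderiv ℝ (fderiv ℝ f) (P t) (f (P t))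
      (modulatedSum κ (primitiveAmplitude κ (primitiveAmplitude κ a)) ω t)
    + fderiv ℝ f (P t)
      (modulatedSum κ (primitiveAmplitude κ (primitiveAmplitude κ fun m ↦ deriv (a m))) ω t)
    - modulatedSum κ (primitiveAmplitude κ (primitiveAmplitude κ fun m ↦ deriv (deriv (a m)))) ω t

/-- The approximate solution `Z = Y₁ + ω⁻² G`. -/
noncomputable def correctedExpansion (f : E → E) (κ : ι → ℝ) (a : ι → ℝ → E) (P p : ℝ → E)
    (ω t : ℝ) : E :=
  firstOrderExpansion κ a P p ω t + (ω ^ 2)⁻¹ • corrector f κ a P ω t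

/-- The residual of `Z = correctedExpansion f κ a P p` in the oscillatory equation. -/
noncomputable def expansionResidual (f : E → E) (κ : ι → ℝ) (a : ι → ℝ → E) (P p : ℝ → E)
    (ω t : ℝ) : E :=
  (ω ^ 2)⁻¹ • (correctorRemainder f κ a P ω t - fderiv ℝ f (P t) (corrector f κ a P ω t))
    - (f (correctedExpansion f κ a P p ω t) - f (P t)
      - fderiv ℝ f (P t) (correctedExpansion f κ a P p ω t - P t))

variable {f : E → E} {κ : ι → ℝ} {a : ι → ℝ → E} {P p : ℝ → E}

section Derivatives

variable {s : Set ℝ} {ω t : ℝ}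

theorem hasDerivWithinAt_firstOrderExpansion (hκ : ∀ m, κ m ≠ 0)
    (ha : ∀ m, Differentiable ℝ (a m)) (hP : HasDerivWithinAt P (f (P t)) s t)
    (hp : HasDerivWithinAt p (fderiv ℝ f (P t) (p t)) s t) (hω : ω ≠ 0) :
    HasDerivWithinAt (firstOrderExpansion κ a P p ω)
      (f (P t) + modulatedSum κ a ω t + ω⁻¹ • (fderiv ℝ f (P t) (p t)
        + modulatedSum κ (primitiveAmplitude κ fun m ↦ deriv (a m)) ω t)) s t := by
  have hosc := hasDerivAt_modulatedSum_primitiveAmplitude hκ (fun m ↦ (ha m t).hasDerivAt) ω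
  refine (hP.add ((hp.add hosc.hasDerivWithinAt).const_smul ω⁻¹)).congr_deriv ?_
  simp only [smul_add, inv_smul_smul₀ hω]
  abel

theorem hasDerivWithinAt_corrector (hκ : ∀ m, κ m ≠ 0) (hf : ContDiff ℝ 2 f)
    (ha : ∀ m, ContDiff ℝ 2 (a m)) (hP : HasDerivWithinAt P (f (P t)) s t) :
    HasDerivWithinAt (corrector f κ a P ω)
      (ω • (fderiv ℝ f (P t) (modulatedSum κ (primitiveAmplitude κ a) ω t)
          - modulatedSum κ (primitiveAmplitude κ fun m ↦ deriv (a m)) ω t)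
        + correctorRemainder f κ a P ω t) s t := by
  have ha' (m : ι) : HasDerivAt (a m) (deriv (a m) t) t :=
    ((ha m).differentiable two_ne_zero t).hasDerivAt
  have ha'' (m : ι) : HasDerivAt (deriv (a m)) (deriv (deriv (a m)) t) t :=
    ((ha m).differentiable_deriv_two t).hasDerivAt
  have hDf : HasDerivWithinAt (fun t ↦ fderiv ℝ f (P t))
      (fderiv ℝ (fderiv ℝ f) (P t) (f (P t))) s t :=
    ((hf.fderiv_right (m := 1) (by norm_num)).differentiable one_ne_zero
      (P t)).hasFDerivAt.comp_hasDerivWithinAt t hP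
  have hosc := hasDerivAt_modulatedSum_primitiveAmplitude hκ
    (hasDerivAt_primitiveAmplitude κ ha') ω
  have hosc' := hasDerivAt_modulatedSum_primitiveAmplitude hκ
    (hasDerivAt_primitiveAmplitude κ ha'') ω
  refine ((hDf.clm_apply hosc.hasDerivWithinAt).sub hosc'.hasDerivWithinAt).congr_deriv ?_
  simp only [correctorRemainder, map_add, map_smul, smul_sub]
  abel

theorem hasDerivWithinAt_correctedExpansion (hκ : ∀ m, κ m ≠ 0) (hf : ContDiff ℝ 2 f)
    (ha : ∀ m, ContDiff ℝ 2 (a m)) (hP : HasDerivWithinAt P (f (P t)) s t)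
    (hp : HasDerivWithinAt p (fderiv ℝ f (P t) (p t)) s t) (hω : ω ≠ 0) :
    HasDerivWithinAt (correctedExpansion f κ a P p ω)
      (f (correctedExpansion f κ a P p ω t) + modulatedSum κ a ω t
        + expansionResidual f κ a P p ω t) s t := by
  have hY := hasDerivWithinAt_firstOrderExpansion hκ
    (fun m ↦ (ha m).differentiable two_ne_zero) hP hp hω
  have hG := hasDerivWithinAt_corrector (ω := ω) hκ hf ha hP
  refine (hY.add (hG.const_smul (ω ^ 2)⁻¹)).congr_deriv ?_
  have hωω : (ω ^ 2)⁻¹ * ω = ω⁻¹ := by field_simp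
  have hsub : correctedExpansion f κ a P p ω t - P t =
      ω⁻¹ • (p t + modulatedSum κ (primitiveAmplitude κ a) ω t)
        + (ω ^ 2)⁻¹ • corrector f κ a P ω t := by
    simp only [correctedExpansion, firstOrderExpansion]
    abel
  simp only [expansionResidual, hsub, map_add, map_smul, smul_add, smul_sub, smul_smul, hωω]
  abel

end Derivatives

section Bounds

variable {K : Set ℝ}

theorem isBigO_one_corrector (hf : ContDiff ℝ 1 f) (ha : ∀ m, ContDiff ℝ 1 (a m))
    (hP : ContinuousOn P K) (hK : IsCompact K) (l : Filter ℝ) :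
    (fun x : ℝ × ℝ ↦ corrector f κ a P x.1 x.2) =O[l ×ˢ 𝓟 K] fun _ ↦ (1 : ℝ) := by
  have hDf := isBigO_one_prod_principal_of_continuousOn
    ((hf.continuous_fderiv one_ne_zero).comp_continuousOn hP) hK l
  have hS := isBigO_one_modulatedSum κ (continuousOn_primitiveAmplitude κ
    (continuousOn_primitiveAmplitude κ fun m ↦ (ha m).continuous.continuousOn)) hK l
  have hR := isBigO_one_modulatedSum κ (continuousOn_primitiveAmplitude κ
    (continuousOn_primitiveAmplitude κ fun m ↦ (ha m).continuous_deriv_one.continuousOn)) hK l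
  have hDfS := isBigO_clm_apply hDf hS
  simp only [mul_one] at hDfS
  exact hDfS.sub hR

theorem isBigO_one_correctorRemainder (hf : ContDiff ℝ 2 f) (ha : ∀ m, ContDiff ℝ 2 (a m))
    (hP : ContinuousOn P K) (hK : IsCompact K) (l : Filter ℝ) :
    (fun x : ℝ × ℝ ↦ correctorRemainder f κ a P x.1 x.2) =O[l ×ˢ 𝓟 K] fun _ ↦ (1 : ℝ) := by
  have hDf_cont : ContDiff ℝ 1 (fderiv ℝ f) := hf.fderiv_right (by norm_num)
  have hDf := isBigO_one_prod_principal_of_continuousOn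
    (hDf_cont.continuous.comp_continuousOn hP) hK l
  have hD2f := isBigO_one_prod_principal_of_continuousOn
    (((hDf_cont.continuous_fderiv one_ne_zero).comp_continuousOn hP).clm_apply
      (hf.continuous.comp_continuousOn hP)) hK l
  have hS := isBigO_one_modulatedSum κ (continuousOn_primitiveAmplitude κ
    (continuousOn_primitiveAmplitude κ fun m ↦ (ha m).continuous.continuousOn)) hK l
  have hR := isBigO_one_modulatedSum κ (continuousOn_primitiveAmplitude κ
    (continuousOn_primitiveAmplitude κ
      fun m ↦ (ha m).differentiable_deriv_two.continuous.continuousOn)) hK l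
  have hQ := isBigO_one_modulatedSum κ (continuousOn_primitiveAmplitude κ
    (continuousOn_primitiveAmplitude κ
      fun m ↦ (ContDiff.deriv' (n := 1) (ha m)).continuous_deriv_one.continuousOn)) hK l
  have hD2fS := isBigO_clm_apply hD2f hS
  have hDfR := isBigO_clm_apply hDf hR
  simp only [mul_one] at hD2fS hDfR
  exact (hD2fS.add hDfR).sub hQ

theorem isBigO_correctedExpansion_sub_firstOrderExpansion (hf : ContDiff ℝ 1 f)
    (ha : ∀ m, ContDiff ℝ 1 (a m)) (hP : ContinuousOn P K) (hK : IsCompact K) (l : Filter ℝ) :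
    (fun x : ℝ × ℝ ↦ correctedExpansion f κ a P p x.1 x.2 - firstOrderExpansion κ a P p x.1 x.2)
      =O[l ×ˢ 𝓟 K] fun x ↦ (x.1 ^ 2)⁻¹ := by
  simpa only [correctedExpansion, add_sub_cancel_left, smul_eq_mul, mul_one] using
    (isBigO_refl (fun x : ℝ × ℝ ↦ (x.1 ^ 2)⁻¹) _).smul
      (isBigO_one_corrector (κ := κ) hf ha hP hK l)

theorem isBigO_correctedExpansion_sub (hf : ContDiff ℝ 1 f) (ha : ∀ m, ContDiff ℝ 1 (a m))
    (hP : ContinuousOn P K) (hp : ContinuousOn p K) (hK : IsCompact K) :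
    (fun x : ℝ × ℝ ↦ correctedExpansion f κ a P p x.1 x.2 - P x.2)
      =O[atTop ×ˢ 𝓟 K] fun x ↦ x.1⁻¹ := by
  have hfirst : (fun x : ℝ × ℝ ↦ firstOrderExpansion κ a P p x.1 x.2 - P x.2)
      =O[atTop ×ˢ 𝓟 K] fun x ↦ x.1⁻¹ := by
    have hU := isBigO_one_modulatedSum κ (continuousOn_primitiveAmplitude κ
      fun m ↦ (ha m).continuous.continuousOn) hK atTop
    simpa only [firstOrderExpansion, add_sub_cancel_left, smul_eq_mul, mul_one] using
      (isBigO_refl (fun x : ℝ × ℝ ↦ x.1⁻¹) _).smul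
        ((isBigO_one_prod_principal_of_continuousOn hp hK atTop).add hU)
  have hinv_sq : (fun x : ℝ × ℝ ↦ (x.1 ^ 2)⁻¹) =O[atTop ×ˢ 𝓟 K] fun x ↦ x.1⁻¹ := by
    have hinv : (fun x : ℝ × ℝ ↦ x.1⁻¹) =O[atTop ×ˢ 𝓟 K] fun _ ↦ (1 : ℝ) :=
      (tendsto_inv_atTop_zero.comp tendsto_fst).isBigO_one ℝ
    simpa only [pow_two, mul_inv, mul_one] using
      (isBigO_refl (fun x : ℝ × ℝ ↦ x.1⁻¹) _).mul hinv
  have hcorr := (isBigO_correctedExpansion_sub_firstOrderExpansion (κ := κ) (p := p) hf ha hP hK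
    atTop).trans hinv_sq
  simpa only [sub_add_sub_cancel] using hcorr.add hfirst

theorem isBigO_expansionResidual (hf : ContDiff ℝ 2 f) (ha : ∀ m, ContDiff ℝ 2 (a m))
    (hP : ContinuousOn P K) (hp : ContinuousOn p K) (hK : IsCompact K) :
    (fun x : ℝ × ℝ ↦ expansionResidual f κ a P p x.1 x.2)
      =O[atTop ×ˢ 𝓟 K] fun x ↦ (x.1 ^ 2)⁻¹ := by
  have hf₁ : ContDiff ℝ 1 f := hf.of_le one_le_two
  have ha₁ (m : ι) : ContDiff ℝ 1 (a m) := (ha m).of_le one_le_two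
  have hZ := isBigO_correctedExpansion_sub (κ := κ) hf₁ ha₁ hP hp hK
  have htaylor := isBigO_sub_sub_fderiv_sq_of_isCompact hf (hK.image_of_continuousOn hP)
    ((eventually_principal.2 fun t ht ↦ mem_image_of_mem P ht).prod_inr atTop)
    (hZ.trans_tendsto (tendsto_inv_atTop_zero.comp tendsto_fst))
  have hZ_sq := hZ.norm_left.pow 2
  simp only [inv_pow] at hZ_sq
  have hDfG := isBigO_clm_apply (isBigO_one_prod_principal_of_continuousOn
    ((hf₁.continuous_fderiv one_ne_zero).comp_continuousOn hP) hK atTop)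
    (isBigO_one_corrector (κ := κ) hf₁ ha₁ hP hK atTop)
  simp only [mul_one] at hDfG
  have hH := (isBigO_refl (fun x : ℝ × ℝ ↦ (x.1 ^ 2)⁻¹) _).smul
    ((isBigO_one_correctorRemainder (κ := κ) hf ha hP hK atTop).sub hDfG)
  simp only [smul_eq_mul, mul_one] at hH
  exact hH.sub (htaylor.trans hZ_sq)

end Bounds

end Expansion

theorem nonlinear_first_order_error_general {ι E : Type*} [Fintype ι] [NormedAddCommGroup E]
    [NormedSpace ℂ E] {f : E → E} {κ : ι → ℝ} {a : ι → ℝ → E} {P p : ℝ → E} {y : ℝ → ℝ → E}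
    {T : ℝ} (hT : 0 ≤ T) (hf : ContDiff ℝ 2 f) (hκ : ∀ m, κ m ≠ 0)
    (ha : ∀ m, ContDiff ℝ 2 (a m))
    (hP : ∀ t ∈ Icc 0 T, HasDerivWithinAt P (f (P t)) (Icc 0 T) t)
    (hy0 : ∀ᶠ ω in atTop, y ω 0 = P 0)
    (hy : ∀ᶠ ω in atTop, ∀ t ∈ Icc 0 T,
      HasDerivWithinAt (y ω) (f (y ω t) + modulatedSum κ a ω t) (Icc 0 T) t)
    (hp0 : p 0 = -∑ m, primitiveAmplitude κ a m 0)
    (hp : ∀ t ∈ Icc 0 T, HasDerivWithinAt p (fderiv ℝ f (P t) (p t)) (Icc 0 T) t) :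
    (fun x : ℝ × ℝ ↦ y x.1 x.2 - firstOrderExpansion κ a P p x.1 x.2)
      =O[atTop ×ˢ 𝓟 (Icc 0 T)] fun x ↦ (x.1 ^ 2)⁻¹ := by
  have hf₁ : ContDiff ℝ 1 f := hf.of_le one_le_two
  have ha₁ (m : ι) : ContDiff ℝ 1 (a m) := (ha m).of_le one_le_two
  have hPc : ContinuousOn P (Icc 0 T) := fun t ht ↦ (hP t ht).continuousWithinAt
  have hpc : ContinuousOn p (Icc 0 T) := fun t ht ↦ (hp t ht).continuousWithinAt
  have hZY := isBigO_correctedExpansion_sub_firstOrderExpansion (κ := κ) (p := p) hf₁ ha₁ hPc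
    isCompact_Icc atTop
  have hZP := isBigO_correctedExpansion_sub (κ := κ) hf₁ ha₁ hPc hpc isCompact_Icc
  have hY0 (ω : ℝ) : firstOrderExpansion κ a P p ω 0 = P 0 := by
    simp [firstOrderExpansion, modulatedSum, hp0]
  have hZ0 : (fun ω ↦ y ω 0 - correctedExpansion f κ a P p ω 0) =O[atTop] fun ω ↦ (ω ^ 2)⁻¹ := by
    have h0 : Tendsto (fun ω : ℝ ↦ (ω, (0 : ℝ))) atTop (atTop ×ˢ 𝓟 (Icc 0 T)) :=
      tendsto_id.prodMk (tendsto_principal.2 (.of_forall fun _ ↦ left_mem_Icc.2 hT))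
    refine (hZY.comp_tendsto h0).neg_left.congr' ?_ .rfl
    filter_upwards [hy0] with ω hω
    simp only [Function.comp_apply, hY0, hω, neg_sub]
  have hε : Tendsto (fun ω : ℝ ↦ (ω ^ 2)⁻¹) atTop (𝓝[>] 0) :=
    tendsto_inv_atTop_nhdsGT_zero.comp (tendsto_pow_atTop two_ne_zero)
  have hyZ := isBigO_sub_of_approx_trajectories hf₁ hPc hy
    ((eventually_ne_atTop 0).mono fun ω hω t ht ↦
      hasDerivWithinAt_correctedExpansion hκ hf ha (hP t ht) (hp t ht) hω)
    (hZP.trans_tendsto (tendsto_inv_atTop_zero.comp tendsto_fst)) hε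
    (isBigO_expansionResidual hf ha hPc hpc isCompact_Icc) hZ0
  simpa only [sub_add_sub_cancel] using hyZ.add hZY

/-- The first-order truncation `Y₁(t; ω)` of the asymptotic expansion approximates the
solution of the nonlinear highly oscillatory ODE uniformly on `[0, T]` with error
`O(ω⁻²)`. Here `p_{1,m}(t) = aₘ(t)/(i κₘ)` and `p_{1,0}` solves the variational
equation `p' = Df(p₀₀) p` with `p_{1,0}(0) = − Σₘ p_{1,m}(0)`. -/
theorem nonlinear_first_order_error {d M : ℕ} (hd : 1 ≤ d) (hM : 1 ≤ M)
    (f : (Fin d → ℂ) → (Fin d → ℂ)) (hf : ∀ n : ℕ, ContDiff ℝ (n : ℕ∞) f)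
    (κ : Fin M → ℝ) (hκ : ∀ m, κ m ≠ 0)
    (a : Fin M → ℝ → Fin d → ℂ) (ha : ∀ m, ∀ n : ℕ, ContDiff ℝ (n : ℕ∞) (a m))
    (y₀ : Fin d → ℂ) (T : ℝ) (hT : 0 < T)
    (p₀₀ : ℝ → Fin d → ℂ) (hp₀₀0 : p₀₀ 0 = y₀)
    (hp₀₀ : ∀ t ∈ Set.Icc (0 : ℝ) T,
      HasDerivWithinAt p₀₀ (f (p₀₀ t)) (Set.Icc (0 : ℝ) T) t)
    (ω₀ : ℝ) (hω₀ : 0 < ω₀)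
    (y : ℝ → ℝ → Fin d → ℂ)
    (hy0 : ∀ ω : ℝ, ω₀ ≤ ω → y ω 0 = y₀)
    (hy : ∀ ω : ℝ, ω₀ ≤ ω → ∀ t ∈ Set.Icc (0 : ℝ) T,
      HasDerivWithinAt (y ω)
        (f (y ω t) + ∑ m : Fin M, Complex.exp (Complex.I * (κ m) * ω * t) • a m t)
        (Set.Icc (0 : ℝ) T) t)
    (p₁ : Fin M → ℝ → Fin d → ℂ)
    (hp₁ : ∀ m, ∀ t : ℝ, p₁ m t = (Complex.I * (κ m))⁻¹ • a m t)
    (p₁₀ : ℝ → Fin d → ℂ)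
    (hp₁₀0 : p₁₀ 0 = - ∑ m : Fin M, p₁ m 0)
    (hp₁₀ : ∀ t ∈ Set.Icc (0 : ℝ) T,
      HasDerivWithinAt p₁₀ (fderiv ℝ f (p₀₀ t) (p₁₀ t)) (Set.Icc (0 : ℝ) T) t)
    (Y₁ : ℝ → ℝ → Fin d → ℂ)
    (hY₁ : ∀ ω t : ℝ, Y₁ ω t = p₀₀ t + (ω⁻¹ : ℝ) •
      (p₁₀ t + ∑ m : Fin M, Complex.exp (Complex.I * (κ m) * ω * t) • p₁ m t)) :
    ∃ C > 0, ∃ ω₁ : ℝ, ω₀ ≤ ω₁ ∧ ∀ ω : ℝ, ω₁ ≤ ω → ∀ t ∈ Set.Icc (0 : ℝ) T,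
      ‖y ω t - Y₁ ω t‖ ≤ C * (ω ^ 2)⁻¹ := by
  obtain rfl : p₁ = primitiveAmplitude κ a := funext₂ hp₁
  obtain rfl : Y₁ = firstOrderExpansion κ a p₀₀ p₁₀ := funext₂ hY₁
  have herror := nonlinear_first_order_error_general hT.le (mod_cast hf 2) hκ
    (fun m ↦ mod_cast ha m 2) hp₀₀
    ((eventually_ge_atTop ω₀).mono fun ω hω ↦ (hy0 ω hω).trans hp₀₀0.symm)
    ((eventually_ge_atTop ω₀).mono hy) hp₁₀0 hp₁₀
  simpa using exists_forall_ge_norm_le_of_isBigO herror ω₀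
end
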